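/- arXiv:1705.06957 — 5 statements merged into one kernel-verified Lean document; each statement's English description precedes it below -/
import Mathlib

section
/- Let 0 < q < 1, let f be in the class S_q^* with Taylor expansion f(z) = z + Σ_{n≥2} a_n z^n on the unit disk, and let μ be any complex number. Then |a_3 − μ a_2²| ≤ max{ |2(1−2μ)(ln q/(q−1))² + 2(ln q/(q²−1))| , 2(ln q/(q²−1)) }. -/
open Complex Metric

noncomputable section

/-- The open unit disk in ℂ. -/
def unitDisk : Set ℂ := ball 0 1

/-- The `q`-difference operator. -/
def Dq (q : ℝ) (f : ℂ → ℂ) (z : ℂ) : ℂ :=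
  if z = 0 then deriv f 0 else (f z - f (q * z)) / (z * (1 - q))

/-- The class `A` of normalized analytic functions on the unit disk. -/
def classA (f : ℂ → ℂ) : Prop :=
  DifferentiableOn ℂ f unitDisk ∧ f 0 = 0 ∧ deriv f 0 = 1

/-- The class of `q`-starlike functions. -/
def SqStar (q : ℝ) (f : ℂ → ℂ) : Prop :=
  classA f ∧ ∀ z ∈ unitDisk,
    ‖z * Dq q f z / f z - 1 / (1 - (q : ℂ))‖ ≤ 1 / (1 - q)

open scoped ComplexConjugate Topology
open Filter

theorem fs_pick_aux (h : ℂ → ℂ) (hd : DifferentiableOn ℂ h (ball 0 1)) (r : ℝ) (hr0 : 0 < r)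
    (hr : r < 1) (hb : ∀ z ∈ ball (0 : ℂ) 1, ‖h z‖ ≤ r) : ‖deriv h 0‖ ≤ 1 - ‖h 0‖ ^ 2 := by
  set c := h 0 with hc
  have h0 : (0 : ℂ) ∈ ball (0 : ℂ) 1 := by simp
  have hcr : ‖c‖ ≤ r := hb 0 h0
  have hc1 : ‖c‖ < 1 := lt_of_le_of_lt hcr hr
  have hne : ∀ z ∈ ball (0 : ℂ) 1, 1 - conj c * h z ≠ 0 := by
    intro z hz h1
    have h2 : conj c * h z = 1 := (sub_eq_zero.mp h1).symm
    have h3 : ‖c‖ * ‖h z‖ = 1 := by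
      have := congrArg norm h2
      simpa using this
    have := hb z hz
    nlinarith [norm_nonneg c, norm_nonneg (h z)]
  let φ : ℂ → ℂ := fun z => (h z - c) / (1 - conj c * h z)
  have hφd : DifferentiableOn ℂ φ (ball 0 1) :=
    (hd.sub_const c).div ((differentiableOn_const _).sub (hd.const_mul _)) hne
  have hφ0 : φ 0 = 0 := by simp [φ, ← hc]
  have hm : Set.MapsTo φ (ball 0 1) (closedBall (φ 0) 1) := by
    intro z hz
    rw [hφ0, mem_closedBall_zero_iff]
    simp only [φ, norm_div]
    rw [div_le_one (norm_pos_iff.mpr (hne z hz))]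
    have hz1 : ‖h z‖ < 1 := lt_of_le_of_lt (hb z hz) hr
    rw [← sq_le_sq₀ (norm_nonneg _) (norm_nonneg _), Complex.sq_norm, Complex.sq_norm]
    have e1 : ‖h z‖ ^ 2 < 1 := by nlinarith [norm_nonneg (h z)]
    have e2 : ‖c‖ ^ 2 < 1 := by nlinarith [norm_nonneg c]
    rw [Complex.sq_norm, Complex.normSq_apply] at e1 e2
    simp only [Complex.normSq_apply, sub_re, sub_im, mul_re, mul_im, conj_re, conj_im, one_re,
      one_im]
    nlinarith [mul_nonneg (sub_nonneg.mpr e1.le) (sub_nonneg.mpr e2.le)]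
  have key := Complex.norm_deriv_le_div_of_mapsTo_ball hφd hm one_pos
  have hdh : HasDerivAt h (deriv h 0) 0 :=
    (hd.differentiableAt (isOpen_ball.mem_nhds h0)).hasDerivAt
  have hcc : conj c * c = ((‖c‖ ^ 2 : ℝ) : ℂ) := by
    rw [mul_comm, Complex.mul_conj, Complex.normSq_eq_norm_sq]
  have hpos : 0 < 1 - ‖c‖ ^ 2 := by nlinarith [norm_nonneg c]
  have hD : HasDerivAt φ (deriv h 0 / ((1 - ‖c‖ ^ 2 : ℝ) : ℂ)) 0 := by
    have := (hdh.sub_const c).div ((hdh.const_mul (conj c)).const_sub 1) (hne 0 h0)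
    refine this.congr_deriv ?_
    rw [← hc, hcc]
    have : ((1 - ‖c‖ ^ 2 : ℝ) : ℂ) ≠ 0 := by exact_mod_cast hpos.ne'
    push_cast at this ⊢
    field_simp
    ring
  rw [hD.deriv, norm_div, Complex.norm_real, Real.norm_of_nonneg hpos.le, div_one,
    div_le_one hpos] at key
  exact key

theorem fs_pick (h : ℂ → ℂ) (hd : DifferentiableOn ℂ h (ball 0 1))
    (hb : ∀ z ∈ ball (0 : ℂ) 1, ‖h z‖ ≤ 1) : ‖deriv h 0‖ ≤ 1 - ‖h 0‖ ^ 2 := by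
  have h0 : (0 : ℂ) ∈ ball (0 : ℂ) 1 := by simp
  have hdh : HasDerivAt h (deriv h 0) 0 :=
    (hd.differentiableAt (isOpen_ball.mem_nhds h0)).hasDerivAt
  have main : ∀ᶠ r in 𝓝[<] (1 : ℝ), r * ‖deriv h 0‖ ≤ 1 - (r * ‖h 0‖) ^ 2 := by
    filter_upwards [Ioo_mem_nhdsLT (zero_lt_one' ℝ)] with r hr
    have := fs_pick_aux (fun z => (r : ℂ) * h z) (hd.const_mul _) r hr.1 hr.2 (by
      intro z hz
      rw [norm_mul, Complex.norm_real, Real.norm_of_nonneg hr.1.le]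
      have := hb z hz
      nlinarith [hr.1])
    rw [(hdh.const_mul (r : ℂ)).deriv] at this
    simpa [Real.norm_of_nonneg hr.1.le, abs_of_pos hr.1] using this
  have t1 : Tendsto (fun r : ℝ => r * ‖deriv h 0‖) (𝓝[<] 1) (𝓝 (1 * ‖deriv h 0‖)) :=
    (Continuous.tendsto (by fun_prop) 1).mono_left nhdsWithin_le_nhds
  have t2 : Tendsto (fun r : ℝ => 1 - (r * ‖h 0‖) ^ 2) (𝓝[<] 1) (𝓝 (1 - (1 * ‖h 0‖) ^ 2)) :=
    (Continuous.tendsto (f := fun r : ℝ => 1 - (r * ‖h 0‖) ^ 2) (by fun_prop) 1).mono_left nhdsWithin_le_nhds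
  simpa using le_of_tendsto_of_tendsto t1 t2 main

theorem fs_dslope (u : ℂ → ℂ) (hd : DifferentiableOn ℂ u (ball 0 1)) :
    DifferentiableOn ℂ (dslope u 0) (ball 0 1) :=
  (Complex.differentiableOn_dslope (ball_mem_nhds 0 one_pos)).mpr hd

theorem fs_dslope_eq (u : ℂ → ℂ) (z : ℂ) : u z = u 0 + z * dslope u 0 z := by
  have := sub_smul_dslope u 0 z
  simp only [sub_zero, smul_eq_mul] at this
  rw [this]; ring

theorem fs_dslope2 (u : ℂ → ℂ) (hd : DifferentiableOn ℂ u (ball 0 1)) :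
    deriv (deriv u) 0 = 2 * deriv (dslope u 0) 0 := by
  have hd' := fs_dslope u hd
  have h0 : (0 : ℂ) ∈ ball (0 : ℂ) 1 := by simp
  have e1 : deriv u =ᶠ[𝓝 0] fun z => dslope u 0 z + z * deriv (dslope u 0) z := by
    filter_upwards [ball_mem_nhds (0 : ℂ) one_pos] with z hz
    have hz' := (hd'.differentiableAt (isOpen_ball.mem_nhds hz)).hasDerivAt
    have h2 := ((hasDerivAt_id z).mul hz').const_add (u 0)
    have h3 : HasDerivAt u _ z := h2.congr_of_eventuallyEq
      (Eventually.of_forall fun y => fs_dslope_eq u y)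
    rw [h3.deriv]; simp
  rw [e1.deriv_eq]
  have hz' := (hd'.differentiableAt (isOpen_ball.mem_nhds h0)).hasDerivAt
  have hdd := ((hd'.deriv isOpen_ball).differentiableAt (isOpen_ball.mem_nhds h0)).hasDerivAt
  have := (hz'.add ((hasDerivAt_id (0 : ℂ)).mul hdd)).deriv
  refine Eq.trans this ?_
  simp; ring

theorem fs_log (F : ℂ → ℂ) (hd : DifferentiableOn ℂ F (ball 0 1)) (hF0 : F 0 = 1)
    (hF : ∀ z ∈ ball (0 : ℂ) 1, F z ≠ 0) :
    ∃ Λ : ℂ → ℂ, Λ 0 = 0 ∧ (∀ z ∈ ball (0 : ℂ) 1, HasDerivAt Λ (deriv F z / F z) z) ∧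
      ∀ z ∈ ball (0 : ℂ) 1, F z = exp (Λ z) := by
  have h0 : (0 : ℂ) ∈ ball (0 : ℂ) 1 := by simp
  have hq : DifferentiableOn ℂ (fun z => deriv F z / F z) (ball 0 1) :=
    (hd.deriv isOpen_ball).div hd hF
  obtain ⟨Λ, hΛ0, hΛ⟩ := hq.isExactOn_ball.with_val_at 0 0
  refine ⟨Λ, hΛ0, hΛ, ?_⟩
  have hderiv : ∀ z ∈ ball (0 : ℂ) 1, HasDerivAt (fun z => F z * exp (-Λ z)) 0 z := by
    intro z hz
    have hz' := (hd.differentiableAt (isOpen_ball.mem_nhds hz)).hasDerivAt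
    refine (hz'.mul (hΛ z hz).neg.cexp).congr_deriv ?_
    have := hF z hz
    field_simp
    ring
  intro z hz
  have hconst := (convex_ball (0 : ℂ) 1).is_const_of_fderivWithin_eq_zero (𝕜 := ℂ)
    (f := fun z => F z * exp (-Λ z))
    (fun z hz => (hderiv z hz).differentiableAt.differentiableWithinAt)
    (fun z hz => by
      rw [fderivWithin_of_isOpen isOpen_ball hz]
      have := (hderiv z hz).hasFDerivAt.fderiv
      rw [this]; ext; simp) hz h0
  simp only [hF0, hΛ0, neg_zero, exp_zero, mul_one] at hconst
  rw [exp_neg, ← div_eq_mul_inv, div_eq_one_iff_eq (exp_ne_zero _)] at hconst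
  exact hconst

theorem fs_qmem (q : ℝ) (hq0 : 0 < q) (hq1 : q < 1) (z : ℂ) (hz : z ∈ ball (0 : ℂ) 1) :
    (q : ℂ) * z ∈ ball (0 : ℂ) 1 := by
  rw [mem_ball_zero_iff] at hz ⊢
  rw [norm_mul, Complex.norm_real, Real.norm_of_nonneg hq0.le]
  nlinarith [norm_nonneg z]

theorem fs_le (q : ℝ) (hq0 : 0 < q) (hq1 : q < 1) (f : ℂ → ℂ)
    (hd : DifferentiableOn ℂ f (ball 0 1)) (hf1 : deriv f 0 = 1)
    (hle : ∀ z ∈ ball (0 : ℂ) 1, f z ≠ 0 → ‖f (q * z)‖ ≤ ‖f z‖) :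
    ∀ z ∈ ball (0 : ℂ) 1, ‖f (q * z)‖ ≤ ‖f z‖ := by
  intro z hz
  have h0 : (0 : ℂ) ∈ ball (0 : ℂ) 1 := by simp
  have han : AnalyticOnNhd ℂ f (ball 0 1) := hd.analyticOnNhd isOpen_ball
  have hev : ∀ᶠ w in 𝓝[≠] z, f w ≠ 0 := by
    by_contra hcon
    have hfr : ∃ᶠ w in 𝓝[≠] z, f w = 0 := by
      intro h; exact hcon h
    have hz0 := han.eqOn_zero_of_preconnected_of_frequently_eq_zero
      (convex_ball (0 : ℂ) 1).isPreconnected hz hfr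
    have : f =ᶠ[𝓝 0] fun _ => 0 := by
      filter_upwards [ball_mem_nhds (0 : ℂ) one_pos] with w hw using hz0 hw
    rw [this.deriv_eq] at hf1
    simp at hf1
  have hev2 : ∀ᶠ w in 𝓝[≠] z, ‖f (q * w)‖ ≤ ‖f w‖ := by
    filter_upwards [hev, nhdsWithin_le_nhds (isOpen_ball.mem_nhds hz)] with w hw hwb
    exact hle w hwb hw
  have c1 : ContinuousAt f z := hd.continuousOn.continuousAt (isOpen_ball.mem_nhds hz)
  have c2 : ContinuousAt f (q * z) :=
    hd.continuousOn.continuousAt (isOpen_ball.mem_nhds (fs_qmem q hq0 hq1 z hz))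
  have c3 : ContinuousAt (fun w => f (q * w)) z :=
    ContinuousAt.comp (g := f) (f := fun w : ℂ => (q : ℂ) * w) c2 (by fun_prop)
  exact le_of_tendsto_of_tendsto (c3.norm.tendsto.mono_left nhdsWithin_le_nhds)
    (c1.norm.tendsto.mono_left nhdsWithin_le_nhds) hev2

theorem fs_ne (q : ℝ) (hq0 : 0 < q) (hq1 : q < 1) (f : ℂ → ℂ)
    (hd : DifferentiableOn ℂ f (ball 0 1)) (hf0 : f 0 = 0) (hf1 : deriv f 0 = 1)
    (hle : ∀ z ∈ ball (0 : ℂ) 1, ‖f (q * z)‖ ≤ ‖f z‖) :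
    ∀ z ∈ ball (0 : ℂ) 1, dslope f 0 z ≠ 0 := by
  intro z hz hFz
  have hF0 : dslope f 0 0 = 1 := by rw [dslope_same, hf1]
  have hz0 : z ≠ 0 := by
    rintro rfl
    rw [hF0] at hFz; exact one_ne_zero hFz
  have hfz : f z = 0 := by rw [fs_dslope_eq f z, hf0, hFz]; simp
  have hqc : (q : ℂ) ≠ 0 := by exact_mod_cast hq0.ne'
  have hn : ∀ n : ℕ, (q : ℂ) ^ n * z ∈ ball (0 : ℂ) 1 ∧ f ((q : ℂ) ^ n * z) = 0 := by
    intro n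
    induction n with
    | zero => simpa using ⟨by simpa using hz, hfz⟩
    | succ n ih =>
      have e : (q : ℂ) ^ (n + 1) * z = q * (q ^ n * z) := by ring
      rw [e]
      refine ⟨fs_qmem q hq0 hq1 _ ih.1, ?_⟩
      have := hle _ ih.1
      rw [ih.2, norm_zero] at this
      exact norm_le_zero_iff.mp this
  have hFn : ∀ n : ℕ, dslope f 0 ((q : ℂ) ^ n * z) = 0 := by
    intro n
    have h1 := fs_dslope_eq f ((q : ℂ) ^ n * z)
    rw [(hn n).2, hf0, zero_add] at h1
    exact (mul_eq_zero.mp h1.symm).resolve_left (mul_ne_zero (pow_ne_zero _ hqc) hz0)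
  have hlim : Tendsto (fun n : ℕ => (q : ℂ) ^ n * z) atTop (𝓝 0) := by
    have : Tendsto (fun n : ℕ => (q : ℂ) ^ n) atTop (𝓝 0) :=
      tendsto_pow_atTop_nhds_zero_of_norm_lt_one (by
        rwa [Complex.norm_real, Real.norm_of_nonneg hq0.le])
    simpa using this.mul_const z
  have hc : ContinuousAt (dslope f 0) 0 :=
    (fs_dslope f hd).continuousOn.continuousAt (ball_mem_nhds 0 one_pos)
  have h1 := hc.tendsto.comp hlim
  have h2 : Tendsto (dslope f 0 ∘ fun n : ℕ => (q : ℂ) ^ n * z) atTop (𝓝 0) := by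
    have : (dslope f 0 ∘ fun n : ℕ => (q : ℂ) ^ n * z) = fun _ => 0 := by
      funext n; exact hFn n
    rw [this]; exact tendsto_const_nhds
  have := tendsto_nhds_unique h1 h2
  rw [hF0] at this
  exact one_ne_zero this

theorem fs_coeff (f : ℂ → ℂ) (a : ℕ → ℂ)
    (ha : ∀ z ∈ ball (0 : ℂ) 1, HasSum (fun n => a n * z ^ n) (f z))
    (hd : DifferentiableOn ℂ f (ball 0 1)) :
    deriv (dslope f 0) 0 = a 2 ∧ deriv (deriv (dslope f 0)) 0 = 2 * a 3 := by
  have hp : HasFPowerSeriesAt f (FormalMultilinearSeries.ofScalars ℂ a) 0 := by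
    rw [hasFPowerSeriesAt_iff]
    filter_upwards [ball_mem_nhds (0 : ℂ) one_pos] with z hz
    simpa [FormalMultilinearSeries.coeff_ofScalars, mul_comm] using ha z hz
  have h1 := hp.has_fpower_series_dslope_fslope
  have h2 := h1.has_fpower_series_dslope_fslope
  refine ⟨?_, ?_⟩
  · have := h1.deriv
    simpa [FormalMultilinearSeries.coeff_ofScalars] using this
  · rw [fs_dslope2 _ (fs_dslope f hd)]
    have := h2.deriv
    rw [this]
    simp [FormalMultilinearSeries.coeff_ofScalars]

theorem fs_E (q : ℝ) (hq0 : 0 < q) (hq1 : q < 1) (F Λ : ℂ → ℂ)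
    (hd : DifferentiableOn ℂ F (ball 0 1)) (hF0 : F 0 = 1)
    (hF : ∀ z ∈ ball (0 : ℂ) 1, F z ≠ 0)
    (hΛ : ∀ z ∈ ball (0 : ℂ) 1, HasDerivAt Λ (deriv F z / F z) z) (b c : ℂ)
    (hb : deriv F 0 = b) (hc : deriv (deriv F) 0 = 2 * c) :
    DifferentiableOn ℂ (fun z => Λ (q * z) - Λ z) (ball 0 1) ∧
    deriv (fun z => Λ (q * z) - Λ z) 0 = (q - 1) * b ∧
    deriv (deriv (fun z => Λ (q * z) - Λ z)) 0 = (q ^ 2 - 1) * (2 * c - b ^ 2) := by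
  have h0 : (0 : ℂ) ∈ ball (0 : ℂ) 1 := by simp
  have hE : ∀ z ∈ ball (0 : ℂ) 1, HasDerivAt (fun z => Λ (q * z) - Λ z)
      (q * (deriv F (q * z) / F (q * z)) - deriv F z / F z) z := by
    intro z hz
    have h1 := hΛ _ (fs_qmem q hq0 hq1 z hz)
    have h2 : HasDerivAt (fun w : ℂ => (q : ℂ) * w) q z := by
      simpa using (hasDerivAt_id z).const_mul (q : ℂ)
    have h3 := HasDerivAt.comp z h1 h2
    refine (h3.sub (hΛ z hz)).congr_deriv ?_
    ring
  have hdF : HasDerivAt F b 0 := hb ▸ (hd.differentiableAt (isOpen_ball.mem_nhds h0)).hasDerivAt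
  have hddF : HasDerivAt (deriv F) (2 * c) 0 :=
    hc ▸ ((hd.deriv isOpen_ball).differentiableAt (isOpen_ball.mem_nhds h0)).hasDerivAt
  have hQ : HasDerivAt (fun z => deriv F z / F z) (2 * c - b ^ 2) 0 := by
    refine (hddF.div hdF (hF 0 h0)).congr_deriv ?_
    rw [hF0, hb]; ring
  have hQ2 : HasDerivAt (fun z : ℂ => deriv F (q * z) / F (q * z)) ((2 * c - b ^ 2) * q) 0 := by
    have h2 : HasDerivAt (fun w : ℂ => (q : ℂ) * w) q 0 := by
      simpa using (hasDerivAt_id (0 : ℂ)).const_mul (q : ℂ)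
    have h3 : HasDerivAt (fun z => deriv F z / F z) (2 * c - b ^ 2) ((q : ℂ) * 0) := by
      simpa using hQ
    exact HasDerivAt.comp (0 : ℂ) h3 h2
  refine ⟨fun z hz => (hE z hz).differentiableAt.differentiableWithinAt, ?_, ?_⟩
  · rw [(hE 0 h0).deriv]
    simp only [mul_zero, hF0, hb]; ring
  · have : deriv (fun z => Λ (q * z) - Λ z) =ᶠ[𝓝 0]
        fun z => q * (deriv F (q * z) / F (q * z)) - deriv F z / F z := by
      filter_upwards [ball_mem_nhds (0 : ℂ) one_pos] with z hz using (hE z hz).deriv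
    rw [this.deriv_eq]
    refine ((hQ2.const_mul (q : ℂ)).sub hQ).deriv.trans ?_
    ring

/-- the coefficient estimate for the Schwarz function `E / (E + 2 L)` -/
theorem fs_schwarz (E : ℂ → ℂ) (hd : DifferentiableOn ℂ E (ball 0 1)) (hE0 : E 0 = 0)
    (L : ℝ) (hL : L < 0) (hre : ∀ z ∈ ball (0 : ℂ) 1, (E z).re + L ≤ 0) :
    ‖(2 * L * deriv (deriv E) 0 / 2 - deriv E 0 ^ 2) / (2 * L) ^ 2‖
      ≤ 1 - ‖deriv E 0 / (2 * L)‖ ^ 2 := by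
  have h0 : (0 : ℂ) ∈ ball (0 : ℂ) 1 := by simp
  have hne : ∀ z ∈ ball (0 : ℂ) 1, E z + 2 * L ≠ 0 := by
    intro z hz h
    have h1 := congrArg Complex.re h
    have h2 := hre z hz
    simp at h1
    linarith
  have hwd : DifferentiableOn ℂ (fun z => E z / (E z + 2 * L)) (ball 0 1) :=
    hd.div (hd.add_const _) hne
  have hm : Set.MapsTo (fun z => E z / (E z + 2 * L)) (ball 0 1)
      (closedBall ((fun z => E z / (E z + 2 * L)) 0) 1) := by
    intro z hz
    simp only [hE0, zero_div]
    rw [mem_closedBall_zero_iff, norm_div, div_le_one (norm_pos_iff.mpr (hne z hz)),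
      ← sq_le_sq₀ (norm_nonneg _) (norm_nonneg _), Complex.sq_norm, Complex.sq_norm]
    have h2 := hre z hz
    simp [Complex.normSq_apply]
    nlinarith
  have he := fs_dslope E hd
  have hne2 : ∀ z ∈ ball (0 : ℂ) 1, z * dslope E 0 z + 2 * L ≠ 0 := by
    intro z hz
    have := hne z hz
    rwa [fs_dslope_eq E z, hE0, zero_add] at this
  have hb : ∀ z ∈ ball (0 : ℂ) 1, ‖dslope E 0 z / (z * dslope E 0 z + 2 * L)‖ ≤ 1 := by
    have hcl : ∀ z ∈ ball (0 : ℂ) 1, z ≠ 0 → ‖dslope E 0 z / (z * dslope E 0 z + 2 * L)‖ ≤ 1 := by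
      intro z hz hz0
      have := Complex.norm_dslope_le_div_of_mapsTo_ball hwd hm hz
      rw [dslope_of_ne _ hz0, slope_def_field, hE0] at this
      rw [div_one] at this
      refine le_trans (le_of_eq ?_) this
      congr 1
      rw [fs_dslope_eq E z, hE0]
      have := hne2 z hz
      field_simp
      simp
    intro z hz
    by_cases hz0 : z = 0
    · subst hz0
      have hcont : ContinuousAt (fun z => ‖dslope E 0 z / (z * dslope E 0 z + 2 * L)‖) 0 := by
        have hc := he.continuousOn.continuousAt (isOpen_ball.mem_nhds h0)
        exact (hc.div ((continuousAt_id.mul hc).add continuousAt_const) (hne2 0 h0)).norm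
      refine le_of_tendsto (hcont.tendsto.mono_left (nhdsWithin_le_nhds (s := {0}ᶜ))) ?_
      filter_upwards [nhdsWithin_le_nhds (isOpen_ball.mem_nhds h0), self_mem_nhdsWithin] with w h1 h2
      exact hcl w h1 h2
    · exact hcl z hz hz0
  have hdd : DifferentiableOn ℂ (fun z => dslope E 0 z / (z * dslope E 0 z + 2 * L)) (ball 0 1) :=
    he.div ((differentiableOn_id.mul he).add_const _) hne2
  have key := fs_pick _ hdd hb
  have hz' := (he.differentiableAt (isOpen_ball.mem_nhds h0)).hasDerivAt
  have hD := (hz'.div (((hasDerivAt_id (0 : ℂ)).mul hz').add_const (2 * (L : ℂ)))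
    (hne2 0 h0)).deriv
  have hD2 : deriv (fun z => dslope E 0 z / (z * dslope E 0 z + 2 * L)) 0 =
      (2 * L * deriv (deriv E) 0 / 2 - deriv E 0 ^ 2) / (2 * L) ^ 2 := by
    refine hD.trans ?_
    rw [fs_dslope2 E hd]
    simp
    ring
  rw [hD2] at key
  simpa using key

theorem fs_final (K x y : ℂ) (B : ℝ) (hB : 0 ≤ B) (h : ‖y‖ ≤ 1 - ‖x‖ ^ 2) :
    ‖(B : ℂ) * y + K * x ^ 2‖ ≤ max ‖K‖ B := by
  have h1 : ‖(B : ℂ) * y + K * x ^ 2‖ ≤ B * ‖y‖ + ‖K‖ * ‖x‖ ^ 2 := by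
    refine (norm_add_le _ _).trans ?_
    simp [abs_of_nonneg hB]
  have h2 := le_max_left ‖K‖ B
  have h3 := le_max_right ‖K‖ B
  have h4 : 0 ≤ ‖x‖ ^ 2 := by positivity
  nlinarith [norm_nonneg y, mul_le_mul_of_nonneg_right h2 h4, mul_le_mul_of_nonneg_left h hB,
    mul_le_mul_of_nonneg_right h3 (by linarith [norm_nonneg y] : 0 ≤ 1 - ‖x‖ ^ 2)]

/-- The Fekete–Szegő problem for the class `S_q^*`. -/
theorem fekete_szego_SqStar (q : ℝ) (hq0 : 0 < q) (hq1 : q < 1)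
    (f : ℂ → ℂ) (hf : SqStar q f) (a : ℕ → ℂ)
    (ha0 : a 0 = 0) (ha1 : a 1 = 1)
    (ha : ∀ z ∈ unitDisk, HasSum (fun n => a n * z ^ n) (f z))
    (μ : ℂ) :
    ‖a 3 - μ * (a 2) ^ 2‖ ≤
      max (‖2 * (1 - 2 * μ) * ((Real.log q / (q - 1) : ℝ) : ℂ) ^ 2
            + 2 * ((Real.log q / (q ^ 2 - 1) : ℝ) : ℂ)‖)
          (2 * (Real.log q / (q ^ 2 - 1))) := by
  obtain ⟨⟨hd, hf0, hf1⟩, hst⟩ := hf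
  change DifferentiableOn ℂ f (ball 0 1) at hd
  have hq1c : (1 : ℂ) - q ≠ 0 := by
    rw [sub_ne_zero]; exact_mod_cast hq1.ne'
  have hq1p : 0 < 1 - q := by linarith
  have hle0 : ∀ z ∈ ball (0 : ℂ) 1, f z ≠ 0 → ‖f (q * z)‖ ≤ ‖f z‖ := by
    intro z hz hfz
    have hz0 : z ≠ 0 := by
      rintro rfl; exact hfz hf0
    have h1 := hst z hz
    rw [Dq, if_neg hz0] at h1
    have e : z * ((f z - f (q * z)) / (z * (1 - q))) / f z - 1 / (1 - (q : ℂ))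
        = -(f (q * z) / f z) / ((1 - q : ℝ) : ℂ) := by
      push_cast
      field_simp
      ring
    rw [e, norm_div, norm_neg, norm_div, Complex.norm_real, Real.norm_of_nonneg hq1p.le,
      div_le_div_iff_of_pos_right hq1p, div_le_one (norm_pos_iff.mpr hfz)] at h1
    exact h1
  have hle := fs_le q hq0 hq1 f hd hf1 hle0
  have hFne := fs_ne q hq0 hq1 f hd hf0 hf1 hle
  have hFd := fs_dslope f hd
  have hF0 : dslope f 0 0 = 1 := by rw [dslope_same, hf1]
  obtain ⟨hc2, hc3⟩ := fs_coeff f a ha hd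
  obtain ⟨Λ, hΛ0, hΛ, hexp⟩ := fs_log _ hFd hF0 hFne
  obtain ⟨hEd, hE1, hE2⟩ := fs_E q hq0 hq1 _ Λ hFd hF0 hFne hΛ _ _ hc2 hc3
  have hL : Real.log q < 0 := Real.log_neg hq0 hq1
  have hre : ∀ z ∈ ball (0 : ℂ) 1, (Λ (q * z) - Λ z).re + Real.log q ≤ 0 := by
    have hcl : ∀ z ∈ ball (0 : ℂ) 1, z ≠ 0 → (Λ (q * z) - Λ z).re + Real.log q ≤ 0 := by
      intro z hz hz0
      have h1 := hle z hz
      rw [fs_dslope_eq f (q * z), fs_dslope_eq f z, hf0, zero_add, zero_add,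
        hexp z hz, hexp _ (fs_qmem q hq0 hq1 z hz), norm_mul, norm_mul, norm_mul, Complex.norm_exp,
        Complex.norm_exp, Complex.norm_real, Real.norm_of_nonneg hq0.le] at h1
      have hzp : 0 < ‖z‖ := norm_pos_iff.mpr hz0
      have h2 : q * Real.exp (Λ (q * z)).re ≤ Real.exp (Λ z).re := by
        refine le_of_mul_le_mul_left ?_ hzp
        linarith
      nth_rewrite 1 [← Real.exp_log hq0] at h2
      rw [← Real.exp_add, Real.exp_le_exp] at h2
      simp only [sub_re]
      linarith
    intro z hz
    by_cases hz0 : z = 0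
    · subst hz0
      simp only [mul_zero, sub_self, zero_re, zero_add]
      exact hL.le
    · exact hcl z hz hz0
  have key := fs_schwarz _ hEd (by simp) _ hL hre
  rw [hE1, hE2] at key
  have hB : 0 ≤ 2 * (Real.log q / (q ^ 2 - 1)) := by
    have : q ^ 2 - 1 < 0 := by nlinarith
    exact mul_nonneg (by norm_num) (div_nonneg_of_nonpos hL.le this.le)
  have fin := fs_final (2 * (1 - 2 * μ) * ((Real.log q / (q - 1) : ℝ) : ℂ) ^ 2
            + 2 * ((Real.log q / (q ^ 2 - 1) : ℝ) : ℂ)) _ _ _ hB key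
  refine le_trans (le_of_eq ?_) fin
  congr 1
  have hLc : ((Real.log q : ℝ) : ℂ) ≠ 0 := by exact_mod_cast hL.ne
  have hq1c' : (q : ℂ) - 1 ≠ 0 := by
    rw [sub_ne_zero]; exact_mod_cast hq1.ne
  have hq2c : (q : ℂ) ^ 2 - 1 ≠ 0 := by
    have : q ^ 2 - 1 ≠ 0 := by nlinarith
    exact_mod_cast this
  push_cast
  field_simp
  ring
end
end

section
/- Let 0 < q < 1. The functions F₁(z) = z·exp( Σ_{n≥1} (2 ln q/(qⁿ−1)) zⁿ ) and F₂(z) = z·exp( Σ_{n≥1} (2 ln q/(q^{2n}−1)) z^{2n} ) are well defined and analytic on the unit disk and both belong to the class S_q^*. -/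
open Complex Metric

noncomputable section

/-- The class of `q`-starlike functions of order `α`. -/
def SqStarAlpha (q α : ℝ) (f : ℂ → ℂ) : Prop :=
  classA f ∧ ∀ z ∈ unitDisk,
    ‖(z * Dq q f z / f z - (α : ℂ)) / (1 - (α : ℂ)) - 1 / (1 - (q : ℂ))‖
      ≤ 1 / (1 - q)

/-- The class of `q`-convex functions of order `α`. -/
def CqAlpha (q α : ℝ) (f : ℂ → ℂ) : Prop :=
  classA f ∧ SqStarAlpha q α (fun z => z * Dq q f z)

def Gser (p L : ℝ) (w : ℂ) : ℂ :=
  ∑' n : ℕ, ((2 * L / (p ^ (n + 1) - 1) : ℝ) : ℂ) * w ^ (n + 1)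

lemma Gcoef_bound (p L : ℝ) (hp0 : 0 < p) (hp1 : p < 1) (n : ℕ) :
    |2 * L / (p ^ (n + 1) - 1)| ≤ |2 * L| / (1 - p) := by
  have h1 : p ^ (n + 1) ≤ p := by
    calc p ^ (n + 1) ≤ p ^ 1 := pow_le_pow_of_le_one hp0.le hp1.le (by omega)
      _ = p := pow_one p
  rw [abs_div, abs_of_neg (show p ^ (n + 1) - 1 < 0 by linarith)]
  apply div_le_div_of_nonneg_left (abs_nonneg _) (by linarith) (by linarith)

lemma Gterm_bound (p L : ℝ) (hp0 : 0 < p) (hp1 : p < 1) (r : ℝ) (w : ℂ) (hw : ‖w‖ ≤ r) (n : ℕ) :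
    ‖((2 * L / (p ^ (n + 1) - 1) : ℝ) : ℂ) * w ^ (n + 1)‖ ≤ |2 * L| / (1 - p) * r ^ (n + 1) := by
  rw [norm_mul, norm_pow, Complex.norm_real, Real.norm_eq_abs]
  have h1p : 0 < 1 - p := by linarith
  exact mul_le_mul (Gcoef_bound p L hp0 hp1 n) (pow_le_pow_left₀ (norm_nonneg _) hw _)
    (by positivity) (by positivity)

lemma bound_summable (C r : ℝ) (h0 : 0 ≤ r) (h1 : r < 1) :
    Summable (fun n : ℕ => C * r ^ (n + 1)) :=
  (((summable_nat_add_iff 1).2 (summable_geometric_of_lt_one h0 h1))).mul_left C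

lemma Gser_summable (p L : ℝ) (hp0 : 0 < p) (hp1 : p < 1) (w : ℂ) (hw : ‖w‖ < 1) :
    Summable (fun n : ℕ => ((2 * L / (p ^ (n + 1) - 1) : ℝ) : ℂ) * w ^ (n + 1)) :=
  Summable.of_norm_bounded (bound_summable _ ‖w‖ (norm_nonneg _) hw)
    (Gterm_bound p L hp0 hp1 ‖w‖ w le_rfl)

lemma Gser_diff (p L : ℝ) (hp0 : 0 < p) (hp1 : p < 1) :
    DifferentiableOn ℂ (Gser p L) unitDisk := by
  intro w hw
  have hw' : ‖w‖ < 1 := by simpa [unitDisk] using hw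
  obtain ⟨r, hr, hr1⟩ := exists_between hw'
  have h0 : 0 ≤ r := (norm_nonneg w).trans hr.le
  have hD : DifferentiableOn ℂ (Gser p L) (ball 0 r) := by
    apply differentiableOn_tsum_of_summable_norm (bound_summable (|2 * L| / (1 - p)) r h0 hr1)
    · intro n
      fun_prop
    · exact isOpen_ball
    · intro n z hz
      have hz' : ‖z‖ < r := by simpa using hz
      exact Gterm_bound p L hp0 hp1 r z hz'.le n
  exact (hD.differentiableAt (isOpen_ball.mem_nhds (by simpa using hr))).differentiableWithinAt

lemma Gser_zero (p L : ℝ) : Gser p L 0 = 0 := by simp [Gser]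

lemma Gser_sub (p L : ℝ) (hp0 : 0 < p) (hp1 : p < 1) (w : ℂ) (hw : ‖w‖ < 1) :
    Gser p L (p * w) - Gser p L w = ((2 * L : ℝ) : ℂ) * (w / (1 - w)) := by
  have hpw : ‖(p : ℂ) * w‖ < 1 := by
    rw [norm_mul, Complex.norm_real, Real.norm_eq_abs, abs_of_pos hp0]
    nlinarith [norm_nonneg w]
  have hg : ∑' n : ℕ, w ^ (n + 1) = w / (1 - w) := by
    simp_rw [pow_succ]
    rw [tsum_mul_right, tsum_geometric_of_norm_lt_one hw, div_eq_mul_inv, mul_comm]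
  unfold Gser
  rw [← (Gser_summable p L hp0 hp1 _ hpw).tsum_sub (Gser_summable p L hp0 hp1 w hw), ← hg,
    ← tsum_mul_left]
  congr 1
  ext n
  have hne : p ^ (n + 1) - 1 ≠ 0 := by
    have := pow_lt_one₀ hp0.le hp1 (Nat.succ_ne_zero n)
    simp only [Nat.succ_eq_add_one] at this
    linarith
  have hne' : (p : ℂ) ^ (n + 1) - 1 ≠ 0 := by exact_mod_cast hne
  push_cast
  rw [mul_pow]
  field_simp

lemma re_aux (w : ℂ) (hw : ‖w‖ < 1) : 0 ≤ 1 + 2 * (w / (1 - w)).re := by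
  have h1 : 1 - w ≠ 0 := by
    intro h
    have : w = 1 := by linear_combination -h
    rw [this] at hw
    simp at hw
  have hN : 0 < Complex.normSq (1 - w) := Complex.normSq_pos.2 h1
  have hw2 : Complex.normSq w < 1 := by
    rw [Complex.normSq_eq_norm_sq]
    nlinarith [norm_nonneg w]
  have : 1 + 2 * (w / (1 - w)).re = (1 - Complex.normSq w) / Complex.normSq (1 - w) := by
    rw [Complex.div_re]
    field_simp
    simp [Complex.normSq_apply]
    ring
  rw [this]
  exact div_nonneg (by linarith) hN.le

lemma SqStar_of (q : ℝ) (hq0 : 0 < q) (hq1 : q < 1) (F H : ℂ → ℂ)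
    (hF : ∀ z, F z = z * Complex.exp (H z)) (hH : DifferentiableOn ℂ H unitDisk) (hH0 : H 0 = 0)
    (hS : ∀ z ∈ unitDisk, ∃ w : ℂ, ‖w‖ < 1 ∧
      H (q * z) - H z = ((2 * Real.log q : ℝ) : ℂ) * (w / (1 - w))) : SqStar q F := by
  obtain rfl : F = fun z => z * Complex.exp (H z) := funext hF
  have h1q : 0 < 1 - q := by linarith
  have hqc : (1 - (q : ℂ)) ≠ 0 := by exact_mod_cast h1q.ne'
  have hn : ‖1 - (q : ℂ)‖ = 1 - q := by
    have : (1 - (q : ℂ)) = ((1 - q : ℝ) : ℂ) := by push_cast; rfl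
    rw [this, Complex.norm_real, Real.norm_eq_abs, abs_of_pos h1q]
  refine ⟨⟨?_, by simp, ?_⟩, ?_⟩
  · exact differentiableOn_id.mul hH.cexp
  · have hd : DifferentiableAt ℂ H 0 :=
      hH.differentiableAt (isOpen_ball.mem_nhds (by simp))
    have := (hasDerivAt_id (0 : ℂ)).mul hd.hasDerivAt.cexp
    have h2 := this.deriv
    simp [hH0] at h2
    exact h2
  · intro z hz
    by_cases h0 : z = 0
    · subst h0
      simp [hn]
    · obtain ⟨w, hw, hs⟩ := hS z hz
      have he : Complex.exp (H (q * z)) =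
          Complex.exp (((2 * Real.log q : ℝ) : ℂ) * (w / (1 - w))) * Complex.exp (H z) := by
        rw [← Complex.exp_add, ← hs]
        congr 1
        ring
      have key : z * Dq q (fun z => z * Complex.exp (H z)) z / (z * Complex.exp (H z))
          - 1 / (1 - (q : ℂ)) =
          -(q * Complex.exp (((2 * Real.log q : ℝ) : ℂ) * (w / (1 - w)))) / (1 - (q : ℂ)) := by
        have := Complex.exp_ne_zero (H z)
        simp only [Dq, if_neg h0, he]
        field_simp
        ring
      simp only [key]
      rw [norm_div, hn, norm_neg, norm_mul, Complex.norm_exp, Complex.re_ofReal_mul,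
        Complex.norm_real, Real.norm_eq_abs, abs_of_pos hq0]
      apply div_le_div_of_nonneg_right _ h1q.le
      calc q * Real.exp (2 * Real.log q * (w / (1 - w)).re)
          = Real.exp (Real.log q * (1 + 2 * (w / (1 - w)).re)) := by
            nth_rewrite 1 [← Real.exp_log hq0]
            rw [← Real.exp_add]
            congr 1
            ring
        _ ≤ 1 := by
            rw [Real.exp_le_one_iff]
            exact mul_nonpos_of_nonpos_of_nonneg (Real.log_nonpos hq0.le hq1.le) (re_aux w hw)

/-- The extremal functions `F₁` and `F₂` are well defined, analytic on the unit
disk, and belong to `S_q^*`. -/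
theorem extremal_functions_mem_SqStar (q : ℝ) (hq0 : 0 < q) (hq1 : q < 1)
    (F₁ F₂ : ℂ → ℂ)
    (hF₁ : ∀ z : ℂ, F₁ z =
      z * Complex.exp (∑' n : ℕ, ((2 * Real.log q / (q ^ (n + 1) - 1) : ℝ) : ℂ) * z ^ (n + 1)))
    (hF₂ : ∀ z : ℂ, F₂ z =
      z * Complex.exp (∑' n : ℕ, ((2 * Real.log q / (q ^ (2 * (n + 1)) - 1) : ℝ) : ℂ) * z ^ (2 * (n + 1)))) :
    SqStar q F₁ ∧ SqStar q F₂ := by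
  have hsq : ∀ z : ℂ, z ∈ unitDisk → z ^ 2 ∈ unitDisk := by
    intro z hz
    have hz' : ‖z‖ < 1 := by simpa [unitDisk] using hz
    have : ‖z ^ 2‖ < 1 := by
      rw [norm_pow]
      exact pow_lt_one₀ (norm_nonneg _) hz' two_ne_zero
    simpa [unitDisk] using this
  have hp0 : 0 < q ^ 2 := by positivity
  have hp1 : q ^ 2 < 1 := pow_lt_one₀ hq0.le hq1 two_ne_zero
  constructor
  · refine SqStar_of q hq0 hq1 F₁ (Gser q (Real.log q)) hF₁ (Gser_diff q _ hq0 hq1)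
      (Gser_zero _ _) ?_
    intro z hz
    have hz' : ‖z‖ < 1 := by simpa [unitDisk] using hz
    exact ⟨z, hz', Gser_sub q _ hq0 hq1 z hz'⟩
  · refine SqStar_of q hq0 hq1 F₂ (fun z => Gser (q ^ 2) (Real.log q) (z ^ 2)) ?_ ?_ ?_ ?_
    · intro z
      rw [hF₂ z]
      simp only [Gser, pow_mul]
    · exact (Gser_diff (q ^ 2) _ hp0 hp1).comp (by fun_prop) hsq
    · simp [Gser_zero]
    · intro z hz
      have hz' : ‖z ^ 2‖ < 1 := by simpa [unitDisk] using hsq z hz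
      refine ⟨z ^ 2, hz', ?_⟩
      rw [← Gser_sub (q ^ 2) _ hp0 hp1 _ hz']
      simp only [mul_pow, Complex.ofReal_pow]
end
end

section
/- Let 0 < q < 1 and let F₂(z) = z·exp( Σ_{n≥1} (2 ln q/(q^{2n}−1)) z^{2n} ), with Taylor expansion F₂(z) = z + Σ_{n≥2} a_n z^n on the unit disk. Then |a_2 a_4 − a_3²| = 4 (ln q/(q²−1))²; more precisely a_2 = 0, a_4 = 0 and a_3 = 2 ln q/(q²−1). -/
open Complex Metric

noncomputable section

lemma hfps_aux (b : ℕ → ℂ) (f : ℂ → ℂ)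
    (h : ∀ z ∈ ball (0:ℂ) 1, HasSum (fun n => b n * z ^ n) (f z)) :
    HasFPowerSeriesAt f (FormalMultilinearSeries.ofScalars ℂ b) 0 := by
  rw [hasFPowerSeriesAt_iff]
  filter_upwards [ball_mem_nhds (0:ℂ) one_pos] with z hz
  simpa [FormalMultilinearSeries.coeff_ofScalars, mul_comm] using h z hz

lemma hderiv_aux (b : ℕ → ℂ) (f : ℂ → ℂ)
    (h : ∀ z ∈ ball (0:ℂ) 1, HasSum (fun n => b n * z ^ n) (f z)) :
    HasDerivAt f (b 1) 0 := by
  have := (hfps_aux b f h).hasDerivAt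
  simpa [FormalMultilinearSeries.ofScalars_apply_eq] using this

lemma bound_aux (q : ℝ) (hq0 : 0 < q) (hq1 : q < 1) (w : ℂ) (hw : w ∈ ball (0:ℂ) 1) :
    Summable (fun n : ℕ => ((2 * Real.log q / (q ^ (2 * n) - 1) : ℝ) : ℂ) * w ^ n) := by
  have hw' : ‖w‖ < 1 := by simpa using hw
  refine Summable.of_norm_bounded
    ((summable_geometric_of_lt_one (norm_nonneg w) hw').mul_left
      (|2 * Real.log q| / (1 - q ^ 2))) ?_
  intro n
  rw [norm_mul, norm_pow, Complex.norm_real, Real.norm_eq_abs, abs_div]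
  have h2 : q ^ 2 < 1 := by nlinarith
  gcongr ?_ * _
  rcases Nat.eq_zero_or_pos n with rfl | hn
  · simp only [mul_zero, pow_zero, sub_self, abs_zero, div_zero]
    exact div_nonneg (abs_nonneg _) (by linarith)
  · have h3 : q ^ (2 * n) ≤ q ^ 2 := pow_le_pow_of_le_one hq0.le hq1.le (by omega)
    have h4 : 1 - q ^ 2 ≤ |q ^ (2 * n) - 1| := by
      rw [abs_of_nonpos (by linarith)]; linarith
    exact div_le_div_of_nonneg_left (abs_nonneg _) (by linarith) h4

/-- Sharpness of the Hankel determinant bound: the coefficients of `F₂` satisfy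
`a₂ = 0`, `a₄ = 0`, `a₃ = 2 ln q/(q²−1)`, so `|a₂a₄ − a₃²| = 4 (ln q/(q²−1))²`. -/
theorem hankel_extremal_F2 (q : ℝ) (hq0 : 0 < q) (hq1 : q < 1)
    (F₂ : ℂ → ℂ)
    (hF₂ : ∀ z : ℂ, F₂ z =
      z * Complex.exp (∑' n : ℕ, ((2 * Real.log q / (q ^ (2 * (n + 1)) - 1) : ℝ) : ℂ) * z ^ (2 * (n + 1))))
    (a : ℕ → ℂ) (ha0 : a 0 = 0) (ha1 : a 1 = 1)
    (ha : ∀ z ∈ unitDisk, HasSum (fun n => a n * z ^ n) (F₂ z)) :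
    a 2 = 0 ∧ a 4 = 0 ∧ a 3 = ((2 * Real.log q / (q ^ 2 - 1) : ℝ) : ℂ) ∧
      ‖a 2 * a 4 - (a 3) ^ 2‖ = 4 * (Real.log q / (q ^ 2 - 1)) ^ 2 := by
  set b : ℕ → ℂ := fun n => ((2 * Real.log q / (q ^ (2 * n) - 1) : ℝ) : ℂ) with hb
  have hb0 : b 0 = 0 := by simp [hb]
  set T : ℂ → ℂ := fun w => ∑' n : ℕ, b n * w ^ n with hT
  have hTs : ∀ w ∈ ball (0:ℂ) 1, HasSum (fun n => b n * w ^ n) (T w) :=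
    fun w hw => (bound_aux q hq0 hq1 w hw).hasSum
  have hT0 : T 0 = 0 := by
    have h : ∀ n : ℕ, b n * (0:ℂ) ^ n = 0 := by
      intro n
      rcases Nat.eq_zero_or_pos n with rfl | hn
      · simp [hb0]
      · simp [hn.ne']
    simp [hT, h]
  have hF : ∀ z ∈ ball (0:ℂ) 1, F₂ z = z * Complex.exp (T (z ^ 2)) := by
    intro z hz
    have hz2 : z ^ 2 ∈ ball (0:ℂ) 1 := by
      have : ‖z‖ < 1 := by simpa using hz
      simpa using pow_lt_one₀ (norm_nonneg z) this two_ne_zero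
    rw [hF₂]
    congr 2
    rw [hT]
    simp only
    rw [(hTs _ hz2).summable.tsum_eq_zero_add, hb0, zero_mul, zero_add]
    refine tsum_congr fun n => ?_
    rw [← pow_mul]
  have hodd : ∀ z ∈ ball (0:ℂ) 1, F₂ (-z) = - F₂ z := by
    intro z hz
    rw [hF z hz, hF (-z) (by simpa using hz)]
    simp
  have hsym : ∀ n, a n = - ((-1) ^ n * a n) := by
    have h1 := hfps_aux a F₂ ha
    have h2 := hfps_aux (fun n => - ((-1) ^ n * a n)) F₂ (by
      intro z hz
      have h := (ha (-z) (by simpa [unitDisk] using hz)).neg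
      rw [hodd z hz, neg_neg] at h
      have he : (fun n => - ((-1) ^ n * a n) * z ^ n) = fun n => -(a n * (-z) ^ n) := by
        funext n
        rw [neg_pow z]; ring
      rw [he]
      exact h)
    have h3 := h1.eq_formalMultilinearSeries h2
    intro n
    have h4 := congrArg (fun p => FormalMultilinearSeries.coeff p n) h3
    simpa [FormalMultilinearSeries.coeff_ofScalars] using h4
  have heven : ∀ m, a (2 * m) = 0 := by
    intro m
    have h := hsym (2 * m)
    rw [pow_mul] at h
    norm_num at h
    exact self_eq_neg.mp h
  have hE1 : HasDerivAt (fun w => Complex.exp (T w)) (b 1) 0 := by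
    have h := (hderiv_aux b T hTs).cexp
    simpa [hT0] using h
  have hE2 : HasDerivAt (fun w => Complex.exp (T w)) (a 3) 0 := by
    refine hderiv_aux (fun m => a (2 * m + 1)) _ ?_
    intro w hw
    rcases eq_or_ne w 0 with rfl | hw0
    · rw [hT0, Complex.exp_zero]
      have h := hasSum_single (f := fun m => a (2 * m + 1) * (0:ℂ) ^ m) 0
        (fun m hm => by simp [hm])
      simpa [ha1] using h
    · obtain ⟨z, rfl⟩ : ∃ z : ℂ, w = z ^ 2 := by
        obtain ⟨z, hz⟩ := IsAlgClosed.exists_pow_nat_eq w (n := 2) two_pos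
        exact ⟨z, hz.symm⟩
      have hz0 : z ≠ 0 := by rintro rfl; simp at hw0
      have hz : z ∈ ball (0:ℂ) 1 := by
        have h : ‖z‖ ^ 2 < 1 := by simpa using hw
        have : ‖z‖ < 1 := by
          by_contra hcon
          push Not at hcon
          nlinarith
        simpa using this
      have h := ha z hz
      have hinj : Function.Injective (fun m : ℕ => 2 * m + 1) := by
        intro x y hxy
        simp only at hxy
        omega
      rw [← hinj.hasSum_iff] at h
      · rw [hF z hz] at h
        have h' := h.mul_left z⁻¹
        rw [inv_mul_cancel_left₀ hz0] at h'
        have he : (fun m => a (2 * m + 1) * (z ^ 2) ^ m) = fun m =>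
            z⁻¹ * ((fun n => a n * z ^ n) ∘ fun m : ℕ => 2 * m + 1) m := by
          funext m
          simp only [Function.comp]
          rw [← pow_mul, pow_succ]
          field_simp
        rw [he]
        exact h'
      · intro n hn
        rcases Nat.even_or_odd' n with ⟨k, rfl | rfl⟩
        · simp [heven]
        · exact absurd ⟨k, rfl⟩ hn
  have h3 : a 3 = ((2 * Real.log q / (q ^ 2 - 1) : ℝ) : ℂ) := by
    rw [hE2.unique hE1]
  have h2 : a 2 = 0 := heven 1
  refine ⟨h2, heven 2, h3, ?_⟩
  rw [h2, h3, zero_mul, zero_sub, norm_neg, norm_pow, Complex.norm_real, Real.norm_eq_abs, sq_abs]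
  ring
end
end

section
/- Let 0 < q < 1 and let f ∈ S_q^* with Taylor expansion f(z) = z + Σ_{n≥2} a_n zⁿ on the unit disk. Then there exists a function p in the Carathéodory class P, with Taylor expansion p(z) = 1 + Σ_{n≥1} p_n zⁿ, such that a_2 = p_1 (ln q/(q−1)) and a_3 = p_2 (ln q/(q²−1)) + (p_1²/2)(ln q/(q−1))². -/
open Complex Metric

noncomputable section

/-- The Carathéodory class `P`. -/
def caratheodory (p : ℂ → ℂ) : Prop :=
  DifferentiableOn ℂ p unitDisk ∧ p 0 = 1 ∧ ∀ z ∈ unitDisk, 0 ≤ (p z).re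

theorem aux_mem {q : ℝ} (hq0 : 0 < q) (hq1 : q < 1) {z : ℂ} (hz : z ∈ ball (0 : ℂ) 1) :
    (q : ℂ) * z ∈ ball (0 : ℂ) 1 := by
  simp only [mem_ball, dist_zero_right, norm_mul, norm_real, Real.norm_eq_abs, abs_of_pos hq0] at *
  nlinarith [norm_nonneg z]

/-- A function with `q ‖g (q z)‖ ≤ ‖g z‖` off its zeros has no zeros. -/
theorem aux_ineq {q : ℝ} (hq0 : 0 < q) (hq1 : q < 1) {g : ℂ → ℂ}
    (hg : DifferentiableOn ℂ g (ball 0 1)) (hg0 : g 0 = 1)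
    (h : ∀ z ∈ ball (0 : ℂ) 1, g z ≠ 0 → q * ‖g (q * z)‖ ≤ ‖g z‖) :
    ∀ z ∈ ball (0 : ℂ) 1, g z ≠ 0 := by
  have han : AnalyticOnNhd ℂ g (ball 0 1) := hg.analyticOnNhd isOpen_ball
  have step : ∀ z ∈ ball (0 : ℂ) 1, g z = 0 → g (q * z) = 0 := by
    intro z hz hgz
    rcases (han z hz).eventually_eq_zero_or_eventually_ne_zero with h0 | h0
    · have := han.eqOn_zero_of_preconnected_of_eventuallyEq_zero
        (convex_ball (0 : ℂ) 1).isPreconnected hz h0 (mem_ball_self one_pos)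
      simp [hg0] at this
    · have hcg : ContinuousAt g z := (han z hz).continuousAt
      have hcq : ContinuousAt (fun w : ℂ => g (q * w)) z := by
        have : ContinuousAt g (q * z) := (han _ (aux_mem hq0 hq1 hz)).continuousAt
        exact ContinuousAt.comp (f := fun w : ℂ => (q : ℂ) * w) this (by fun_prop)
      have h1 : Filter.Tendsto (fun w : ℂ => q * ‖g (q * w)‖) (nhdsWithin z {z}ᶜ)
          (nhds (q * ‖g (q * z)‖)) :=
        ((hcq.norm.const_mul q).tendsto).mono_left nhdsWithin_le_nhds
      have h2 : Filter.Tendsto (fun w : ℂ => ‖g w‖) (nhdsWithin z {z}ᶜ) (nhds ‖g z‖) :=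
        (hcg.norm.tendsto).mono_left nhdsWithin_le_nhds
      have h3 : q * ‖g (q * z)‖ ≤ ‖g z‖ := by
        refine le_of_tendsto_of_tendsto h1 h2 ?_
        filter_upwards [h0, nhdsWithin_le_nhds (isOpen_ball.mem_nhds hz)] with w hw hwb
        exact h w hwb hw
      rw [hgz, norm_zero] at h3
      have : ‖g (q * z)‖ ≤ 0 := by
        by_contra hc
        push Not at hc
        nlinarith [mul_pos hq0 hc]
      simpa using this
  intro z hz hgz
  have hall : ∀ n : ℕ, (q : ℂ) ^ n * z ∈ ball (0 : ℂ) 1 ∧ g ((q : ℂ) ^ n * z) = 0 := by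
    intro n
    induction n with
    | zero => simpa using ⟨by simpa using hz, hgz⟩
    | succ k ih =>
      have e : (q : ℂ) ^ (k + 1) * z = q * (q ^ k * z) := by ring
      rw [e]
      exact ⟨aux_mem hq0 hq1 ih.1, step _ ih.1 ih.2⟩
  have hlim : Filter.Tendsto (fun n : ℕ => (q : ℂ) ^ n * z) Filter.atTop (nhds 0) := by
    have : Filter.Tendsto (fun n : ℕ => (q : ℂ) ^ n) Filter.atTop (nhds 0) :=
      tendsto_pow_atTop_nhds_zero_of_norm_lt_one (by simpa [abs_of_pos hq0] using hq1)
    simpa using this.mul_const z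
  have hc : ContinuousAt g 0 := (han 0 (mem_ball_self one_pos)).continuousAt
  have h1 := hc.tendsto.comp hlim
  have h2 : (g ∘ fun n : ℕ => (q : ℂ) ^ n * z) = fun _ => 0 := by
    funext n; exact (hall n).2
  rw [h2, hg0] at h1
  exact zero_ne_one (tendsto_nhds_unique tendsto_const_nhds h1)

/-- Holomorphic logarithm on the disk. -/
theorem aux_log {g : ℂ → ℂ} (hg : DifferentiableOn ℂ g (ball 0 1)) (hg0 : g 0 = 1)
    (hne : ∀ z ∈ ball (0 : ℂ) 1, g z ≠ 0) :
    ∃ G : ℂ → ℂ, DifferentiableOn ℂ G (ball 0 1) ∧ G 0 = 0 ∧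
      ∀ z ∈ ball (0 : ℂ) 1, exp (G z) = g z := by
  have hd : DifferentiableOn ℂ (fun z => deriv g z / g z) (ball 0 1) :=
    (hg.deriv isOpen_ball).div hg hne
  obtain ⟨G, hG0, hG⟩ := hd.isExactOn_ball.with_val_at 0 0
  refine ⟨G, fun z hz => (hG z hz).differentiableAt.differentiableWithinAt, hG0, ?_⟩
  have hder : ∀ z ∈ ball (0 : ℂ) 1, HasDerivAt (fun z => g z * exp (-G z)) 0 z := by
    intro z hz
    have h1 : HasDerivAt g (deriv g z) z :=
      (hg.differentiableAt (isOpen_ball.mem_nhds hz)).hasDerivAt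
    have h2 := h1.mul ((hG z hz).neg.cexp)
    convert! h2 using 1
    field_simp [hne z hz]
    ring
  intro z hz
  have hconst : g z * exp (-G z) = g 0 * exp (-G 0) := by
    refine (convex_ball (0 : ℂ) 1).is_const_of_fderivWithin_eq_zero (𝕜 := ℂ)
      (f := fun z => g z * exp (-G z))
      (fun w hw => (hder w hw).differentiableAt.differentiableWithinAt) ?_ hz
      (mem_ball_self one_pos)
    intro w hw
    rw [fderivWithin_of_isOpen isOpen_ball hw, (hder w hw).hasFDerivAt.fderiv]
    ext; simp
  rw [hg0, hG0, exp_neg] at hconst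
  simp only [neg_zero, exp_zero, mul_one] at hconst
  have := exp_ne_zero (G z)
  field_simp at hconst
  exact hconst.symm

theorem aux_taylor {g : ℂ → ℂ} (hg : DifferentiableOn ℂ g (ball 0 1)) {z : ℂ}
    (hz : z ∈ ball (0 : ℂ) 1) :
    HasSum (fun n : ℕ => ((n.factorial : ℂ)⁻¹ * iteratedDeriv n g 0) * z ^ n) (g z) := by
  have := hasSum_taylorSeries_on_ball hg hz
  convert! this using 2 with n
  simp only [sub_zero, smul_eq_mul]
  ring

/-- Coefficients from an expansion. -/
theorem aux_coeff {g : ℂ → ℂ} (hg : DifferentiableOn ℂ g (ball 0 1)) {b : ℕ → ℂ}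
    (hb : ∀ z ∈ ball (0 : ℂ) 1, HasSum (fun n => b n * z ^ n) (g z)) (n : ℕ) :
    b n = (n.factorial : ℂ)⁻¹ * iteratedDeriv n g 0 := by
  have key : ∀ c : ℕ → ℂ, (∀ z ∈ ball (0 : ℂ) 1, HasSum (fun n => c n * z ^ n) (g z)) →
      HasFPowerSeriesAt g (FormalMultilinearSeries.ofScalars ℂ c) 0 := by
    intro c hc
    rw [hasFPowerSeriesAt_iff']
    filter_upwards [isOpen_ball.mem_nhds (mem_ball_self (x := (0 : ℂ)) one_pos)] with z hz
    simpa [FormalMultilinearSeries.coeff_ofScalars, mul_comm] using hc z hz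
  have h2 := key (fun n => (n.factorial : ℂ)⁻¹ * iteratedDeriv n g 0) (fun z hz => aux_taylor hg hz)
  have h3 := congrArg (fun p => FormalMultilinearSeries.coeff p n)
    ((key b hb).eq_formalMultilinearSeries h2)
  simpa [FormalMultilinearSeries.coeff_ofScalars] using h3

/-- Second-order chain rule for `g = exp G` at the origin. -/
theorem aux_deriv {g G : ℂ → ℂ} (hG : DifferentiableOn ℂ G (ball 0 1)) (hG0 : G 0 = 0)
    (h : ∀ z ∈ ball (0 : ℂ) 1, exp (G z) = g z) :
    iteratedDeriv 1 g 0 = iteratedDeriv 1 G 0 ∧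
    iteratedDeriv 2 g 0 = iteratedDeriv 2 G 0 + iteratedDeriv 1 G 0 ^ 2 := by
  have hd : ∀ z ∈ ball (0 : ℂ) 1, HasDerivAt G (deriv G z) z := fun z hz =>
    (hG.differentiableAt (isOpen_ball.mem_nhds hz)).hasDerivAt
  have hd2 : ∀ z ∈ ball (0 : ℂ) 1, HasDerivAt (deriv G) (deriv (deriv G) z) z := fun z hz =>
    ((hG.deriv isOpen_ball).differentiableAt (isOpen_ball.mem_nhds hz)).hasDerivAt
  have h0 : (0 : ℂ) ∈ ball (0 : ℂ) 1 := mem_ball_self one_pos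
  have e1 : ∀ z ∈ ball (0 : ℂ) 1, deriv g z = exp (G z) * deriv G z := by
    intro z hz
    have : g =ᶠ[nhds z] fun w => exp (G w) := by
      filter_upwards [isOpen_ball.mem_nhds hz] with w hw using (h w hw).symm
    rw [this.deriv_eq]
    exact (hd z hz).cexp.deriv
  have e2 : deriv (deriv g) 0 = deriv (deriv G) 0 + deriv G 0 ^ 2 := by
    have : deriv g =ᶠ[nhds 0] fun w => exp (G w) * deriv G w := by
      filter_upwards [isOpen_ball.mem_nhds h0] with w hw using e1 w hw
    rw [this.deriv_eq]
    have h3 := ((hd 0 h0).cexp.mul (hd2 0 h0)).deriv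
    refine Eq.trans h3 ?_
    simp only [hG0, exp_zero]
    ring
  simp only [iteratedDeriv_succ, iteratedDeriv_zero]
  refine ⟨?_, e2⟩
  rw [e1 0 h0, hG0]; simp

/-- For `f ∈ S_q^*` there is a Carathéodory function `p` expressing `a₂` and `a₃`
in terms of the coefficients `p₁, p₂` of `p`. -/
theorem SqStar_coeffs_via_caratheodory (q : ℝ) (hq0 : 0 < q) (hq1 : q < 1)
    (f : ℂ → ℂ) (hf : SqStar q f) (a : ℕ → ℂ)
    (ha0 : a 0 = 0) (ha1 : a 1 = 1)
    (ha : ∀ z ∈ unitDisk, HasSum (fun n => a n * z ^ n) (f z)) :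
    ∃ (p : ℂ → ℂ) (pc : ℕ → ℂ), caratheodory p ∧ pc 0 = 1 ∧
      (∀ z ∈ unitDisk, HasSum (fun n => pc n * z ^ n) (p z)) ∧
      a 2 = pc 1 * ((Real.log q / (q - 1) : ℝ) : ℂ) ∧
      a 3 = pc 2 * ((Real.log q / (q ^ 2 - 1) : ℝ) : ℂ)
        + pc 1 ^ 2 / 2 * ((Real.log q / (q - 1) : ℝ) : ℂ) ^ 2 := by
  obtain ⟨⟨hfd, hf0, hf1⟩, hfq⟩ := hf
  unfold unitDisk at *
  have hb0 : (0 : ℂ) ∈ ball (0 : ℂ) 1 := mem_ball_self one_pos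
  set g : ℂ → ℂ := dslope f 0 with hgdef
  have hg : DifferentiableOn ℂ g (ball 0 1) :=
    (differentiableOn_dslope (isOpen_ball.mem_nhds hb0)).2 hfd
  have hg0 : g 0 = 1 := by rw [hgdef, dslope_same, hf1]
  have hfg : ∀ z, f z = z * g z := by
    intro z
    have := sub_smul_dslope f 0 z
    simpa [hf0] using this.symm
  have hqc : (1 - (q : ℂ)) ≠ 0 := by
    intro hc
    have : (q : ℂ) = 1 := by linear_combination -hc
    have : q = 1 := by exact_mod_cast this
    linarith
  have hineq : ∀ z ∈ ball (0 : ℂ) 1, g z ≠ 0 → q * ‖g (q * z)‖ ≤ ‖g z‖ := by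
    intro z hz hgz
    by_cases hz0 : z = 0
    · subst hz0
      simp [hg0]
      exact hq1.le
    · have h := hfq z hz
      have e : z * Dq q f z / f z - 1 / (1 - (q : ℂ))
          = -((q * g (q * z)) / g z / (1 - (q : ℂ))) := by
        rw [Dq, if_neg hz0, hfg z, hfg (q * z)]
        field_simp
        ring
      have hq' : ‖(1 - (q : ℂ))‖ = 1 - q := by
        have : (1 - (q : ℂ)) = ((1 - q : ℝ) : ℂ) := by push_cast; rfl
        rw [this, norm_real, Real.norm_eq_abs, abs_of_pos (by linarith)]
      rw [e, norm_neg, norm_div, norm_div, norm_mul, hq', norm_real, Real.norm_eq_abs,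
        abs_of_pos hq0, div_le_div_iff_of_pos_right (by linarith),
        div_le_one (norm_pos_iff.2 hgz)] at h
      exact h
  have hne := aux_ineq hq0 hq1 hg hg0 hineq
  obtain ⟨G, hG, hG0, hexp⟩ := aux_log hg hg0 hne
  have hgs : ∀ z ∈ ball (0 : ℂ) 1, HasSum (fun n => a (n + 1) * z ^ n) (g z) := by
    intro z hz
    by_cases hz0 : z = 0
    · subst hz0
      have := hasSum_single (f := fun n => a (n + 1) * (0 : ℂ) ^ n) 0
        (fun n hn => by simp [hn])
      simpa [ha1, hg0] using this
    · have h := ha z hz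
      rw [← hasSum_nat_add_iff' 1] at h
      simp only [Finset.range_one, Finset.sum_singleton, ha0, zero_mul, sub_zero] at h
      have h2 := h.mul_left z⁻¹
      convert! h2 using 1
      · funext n
        field_simp
        ring
      · rw [hfg z]
        field_simp
  have hac := aux_coeff hg hgs
  obtain ⟨d1, d2⟩ := aux_deriv hG hG0 hexp
  set L : ℂ := ((Real.log q : ℝ) : ℂ) with hL
  have hlog : Real.log q < 0 := Real.log_neg hq0 hq1
  have hL0 : L ≠ 0 := by
    rw [hL]; exact_mod_cast hlog.ne
  set c : ℕ → ℂ := fun n => (n.factorial : ℂ)⁻¹ * iteratedDeriv n G 0 with hc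
  have hc0 : c 0 = 0 := by simp [hc, hG0]
  have hq1' : ((q : ℂ) - 1) ≠ 0 := by
    intro h; apply hqc; linear_combination -h
  have hq2' : ((q : ℂ) ^ 2 - 1) ≠ 0 := by
    have : q ^ 2 - 1 ≠ 0 := by nlinarith
    exact_mod_cast this
  refine ⟨fun z => 1 + (G (q * z) - G z) / L,
    fun n => (if n = 0 then 1 else 0) + c n * ((q : ℂ) ^ n - 1) / L, ⟨?_, ?_, ?_⟩, ?_, ?_, ?_, ?_⟩
  · have : DifferentiableOn ℂ (fun z : ℂ => G (q * z)) (ball 0 1) :=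
      hG.comp (f := fun z : ℂ => (q : ℂ) * z) (by fun_prop) (fun z hz => aux_mem hq0 hq1 hz)
    exact ((this.sub hG).div_const L).const_add 1
  · simp
  · intro z hz
    have hw := aux_mem hq0 hq1 hz
    have h1 := hineq z hz (hne z hz)
    rw [← hexp z hz, ← hexp _ hw, norm_exp, norm_exp] at h1
    have h2 : Real.log q + (G (q * z)).re ≤ (G z).re := by
      rw [← Real.exp_le_exp, Real.exp_add, Real.exp_log hq0]
      exact h1
    have h3 : (1 + (G (q * z) - G z) / L).re
        = 1 + ((G (q * z)).re - (G z).re) / Real.log q := by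
      rw [hL, add_re, div_ofReal_re, sub_re, one_re]
    rw [h3]
    have h4 : 1 + ((G (q * z)).re - (G z).re) / Real.log q
        = (Real.log q + (G (q * z)).re - (G z).re) / Real.log q := by
      field_simp [hlog.ne]
      ring
    rw [h4]
    exact div_nonneg_of_nonpos (by linarith) hlog.le
  · simp
  · intro z hz
    have s1 := aux_taylor hG hz
    have s2 := aux_taylor hG (aux_mem hq0 hq1 hz)
    have s3 : HasSum (fun n : ℕ => (if n = 0 then (1 : ℂ) else 0)) 1 := hasSum_ite_eq 0 1
    have s := s3.add ((s2.sub s1).div_const L)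
    convert! s using 1
    funext n
    by_cases hn : n = 0
    · subst hn; simp
    · simp only [hn, if_false, hc, mul_pow]
      ring
  · have h1 := hac 1
    rw [d1] at h1
    have h1' : a 2 = c 1 := h1
    rw [h1']
    push_cast
    rw [← hL]
    field_simp
    ring
  · have h1 := hac 2
    rw [d2] at h1
    have h1' : a 3 = c 2 + c 1 ^ 2 / 2 := by
      rw [show a 3 = a (2 + 1) from rfl, h1]
      simp [hc, Nat.factorial]
      ring
    rw [h1']
    push_cast
    rw [← hL]
    field_simp
    ring
end
end

section
/- Let p be in the Carathéodory class P with Taylor expansion p(z) = 1 + Σ_{n≥1} p_n zⁿ, and assume p_1 is real with 0 ≤ p_1 ≤ 2. Then there exist complex numbers x and w with |x| ≤ 1 and |w| ≤ 1 such that 2p_2 = p_1² + x(4 − p_1²) and 4p_3 = p_1³ + 2(4 − p_1²)p_1 x − p_1(4 − p_1²)x² + 2(4 − p_1²)(1 − |x|²)w. -/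
open Complex Metric

noncomputable section

/-- Schur step. -/
lemma schur_step (f : ℂ → ℂ) (hd : DifferentiableOn ℂ f unitDisk)
    (hb : ∀ z ∈ unitDisk, ‖f z‖ ≤ 1) :
    ∃ g : ℂ → ℂ, DifferentiableOn ℂ g unitDisk ∧ (∀ z ∈ unitDisk, ‖g z‖ ≤ 1) ∧
      ∀ z ∈ unitDisk, f z - f 0 = z * g z * (1 - (starRingEnd ℂ) (f 0) * f z) := by
  have h0 : (0:ℂ) ∈ unitDisk := by simp [unitDisk]
  have hopen : IsOpen unitDisk := isOpen_ball
  have hconn : IsPreconnected unitDisk := (convex_ball (0:ℂ) 1).isPreconnected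
  by_cases ha : ‖f 0‖ = 1
  · refine ⟨fun _ => 0, differentiableOn_const _, by simp, fun z hz => ?_⟩
    have : Set.EqOn f (Function.const ℂ (f 0)) unitDisk :=
      Complex.eqOn_of_isPreconnected_of_isMaxOn_norm hconn hopen hd h0
        (fun y hy => by simpa [ha] using hb y hy)
    simp [this hz]
  · have ha' : ‖f 0‖ < 1 := lt_of_le_of_ne (hb 0 h0) ha
    set a := f 0 with hadef
    have hne : ∀ z ∈ unitDisk, 1 - (starRingEnd ℂ) a * f z ≠ 0 := by
      intro z hz h
      have h1 : (starRingEnd ℂ) a * f z = 1 := (sub_eq_zero.mp h).symm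
      have h2 : ‖a‖ * ‖f z‖ = 1 := by simpa using congrArg norm h1
      nlinarith [hb z hz, norm_nonneg a, norm_nonneg (f z)]
    set h : ℂ → ℂ := fun z => (f z - a) / (1 - (starRingEnd ℂ) a * f z) with hh
    have hhd : DifferentiableOn ℂ h unitDisk :=
      (hd.sub_const a).div ((differentiableOn_const _).sub (hd.const_mul _)) hne
    have hh0 : h 0 = 0 := by simp [hh, hadef]
    have hhb : ∀ z ∈ unitDisk, ‖h z‖ ≤ 1 := by
      intro z hz
      rw [hh]
      simp only [norm_div]
      apply div_le_one_of_le₀ _ (norm_nonneg _)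
      have hs := hb z hz
      have e : ‖f z - a‖ ^ 2 ≤ ‖1 - (starRingEnd ℂ) a * f z‖ ^ 2 := by
        have k1 : ‖f z‖ ^ 2 ≤ 1 := by nlinarith [norm_nonneg (f z)]
        have k2 : ‖a‖ ^ 2 ≤ 1 := by nlinarith [norm_nonneg a]
        rw [← Complex.normSq_eq_norm_sq, Complex.normSq_apply] at k1 k2
        rw [← Complex.normSq_eq_norm_sq, ← Complex.normSq_eq_norm_sq,
          Complex.normSq_apply, Complex.normSq_apply]
        simp
        nlinarith [mul_nonneg (sub_nonneg.2 k1) (sub_nonneg.2 k2)]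
      exact le_of_sq_le_sq e (norm_nonneg _)
    refine ⟨dslope h 0, ?_, ?_, ?_⟩
    · exact (Complex.differentiableOn_dslope (hopen.mem_nhds h0)).2 hhd
    · intro z hz
      have := Complex.norm_dslope_le_div_of_mapsTo_ball (f := h) (c := 0) (R₁ := 1) (R₂ := 1) hhd
        (fun y hy => by simpa [hh0] using hhb y hy) hz
      simpa using this
    · intro z hz
      have e : z * dslope h 0 z = h z := by
        have := sub_smul_dslope h 0 z
        simpa [hh0] using this
      rw [e, hh]
      exact (div_mul_cancel₀ _ (hne z hz)).symm

/-- Shift of a power series. -/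
lemma shift_step (f : ℂ → ℂ) (c : ℕ → ℂ)
    (hf : ∀ z ∈ unitDisk, HasSum (fun n => c n * z ^ n) (f z)) :
    ∃ q : ℂ → ℂ, (∀ z ∈ unitDisk, HasSum (fun n => c (n + 1) * z ^ n) (q z)) ∧
      (∀ z ∈ unitDisk, f z = c 0 + z * q z) := by
  refine ⟨fun z => if z = 0 then c 1 else (f z - c 0) / z, fun z hz => ?_, fun z hz => ?_⟩
  · by_cases h : z = 0
    · subst h
      simp only [if_true]
      have := hasSum_single (f := fun n => c (n + 1) * (0:ℂ) ^ n) 0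
        (fun b hb => by simp [hb])
      simpa using this
    · simp only [h, if_false]
      have h1 := (hasSum_nat_add_iff' 1).2 (hf z hz)
      have h2 := h1.div_const z
      have h3 : (fun n => c (n + 1) * z ^ n) = fun n => c (n + 1) * z ^ (n + 1) / z := by
        ext n
        field_simp
        ring
      rw [h3]
      simpa only [Finset.sum_range_one, pow_zero, mul_one] using h2
  · by_cases h : z = 0
    · subst h
      have h1 := hf 0 hz
      have h2 := hasSum_single (f := fun n => c n * (0:ℂ) ^ n) 0
        (fun b hb => by simp [hb])
      simpa using h1.unique h2
    · simp only [h, if_false]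
      field_simp
      ring

lemma series_zero (f : ℂ → ℂ) (c : ℕ → ℂ)
    (hf : ∀ z ∈ unitDisk, HasSum (fun n => c n * z ^ n) (f z)) : f 0 = c 0 := by
  obtain ⟨q, -, h⟩ := shift_step f c hf
  simpa using h 0 (by simp [unitDisk])

lemma series_cont (f : ℂ → ℂ) (c : ℕ → ℂ)
    (hf : ∀ z ∈ unitDisk, HasSum (fun n => c n * z ^ n) (f z)) : ContinuousAt f 0 := by
  have : HasFPowerSeriesAt f (FormalMultilinearSeries.ofScalars ℂ c) 0 := by
    rw [hasFPowerSeriesAt_iff]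
    filter_upwards [isOpen_ball.mem_nhds (show (0:ℂ) ∈ ball (0:ℂ) 1 by simp)] with z hz
    simpa [mul_comm] using hf z hz
  exact this.continuousAt

lemma limit_step (f g : ℂ → ℂ) (hf : ContinuousAt f 0) (hg : ContinuousAt g 0)
    (h : ∀ z ∈ unitDisk, z * f z = z * g z) : f 0 = g 0 := by
  have h1 : Filter.Tendsto f (nhdsWithin 0 {0}ᶜ) (nhds (f 0)) := hf.tendsto.mono_left inf_le_left
  have h2 : Filter.Tendsto g (nhdsWithin 0 {0}ᶜ) (nhds (g 0)) := hg.tendsto.mono_left inf_le_left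
  refine tendsto_nhds_unique (h1.congr' ?_) h2
  filter_upwards [self_mem_nhdsWithin,
    nhdsWithin_le_nhds (isOpen_ball.mem_nhds (show (0:ℂ) ∈ ball (0:ℂ) 1 by simp))] with z hz hz'
  exact mul_left_cancel₀ hz (h z hz')

/-- Libera–Złotkiewicz representation of the coefficients `p₂, p₃` of a
Carathéodory function with `p₁ ∈ [0,2]` real. -/
theorem caratheodory_p2_p3 (p : ℂ → ℂ) (hp : caratheodory p)
    (pc : ℕ → ℂ) (hpc0 : pc 0 = 1)
    (hpc : ∀ z ∈ unitDisk, HasSum (fun n => pc n * z ^ n) (p z))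
    (hp1_real : (pc 1).im = 0) (hp1_lb : 0 ≤ (pc 1).re) (hp1_ub : (pc 1).re ≤ 2) :
    ∃ x w : ℂ, ‖x‖ ≤ 1 ∧ ‖w‖ ≤ 1 ∧
      2 * pc 2 = pc 1 ^ 2 + x * (4 - pc 1 ^ 2) ∧
      4 * pc 3 = pc 1 ^ 3 + 2 * (4 - pc 1 ^ 2) * pc 1 * x
        - pc 1 * (4 - pc 1 ^ 2) * x ^ 2
        + 2 * (4 - pc 1 ^ 2) * (1 - ((‖x‖ : ℝ) : ℂ) ^ 2) * w := by
  obtain ⟨hd, hp0, hre⟩ := hp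
  have h0 : (0:ℂ) ∈ unitDisk := by simp [unitDisk]
  have hnhds : unitDisk ∈ nhds (0:ℂ) := isOpen_ball.mem_nhds h0
  obtain ⟨q1, hq1, e1⟩ := shift_step p pc hpc
  obtain ⟨q2, hq2, e2⟩ := shift_step q1 _ hq1
  obtain ⟨q3, hq3, e3⟩ := shift_step q2 _ hq2
  have c1 := series_cont _ _ hq1
  have c2 := series_cont _ _ hq2
  have c3 := series_cont _ _ hq3
  have v1 := series_zero _ _ hq1
  have v2 := series_zero _ _ hq2
  have v3 := series_zero _ _ hq3
  simp only [zero_add, Nat.reduceAdd] at e1 e2 e3 v1 v2 v3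
  have hne : ∀ z ∈ unitDisk, p z + 1 ≠ 0 := by
    intro z hz h
    have := congrArg Complex.re h
    simp at this
    linarith [hre z hz]
  obtain ⟨φ, hφd, hφb, hφ⟩ := schur_step (fun z => (p z - 1) / (p z + 1))
    ((hd.sub_const 1).div (hd.add_const 1) hne) (by
      intro z hz
      simp only [norm_div]
      apply div_le_one_of_le₀ _ (norm_nonneg _)
      have e : ‖p z - 1‖ ^ 2 ≤ ‖p z + 1‖ ^ 2 := by
        rw [← Complex.normSq_eq_norm_sq, ← Complex.normSq_eq_norm_sq,
          Complex.normSq_apply, Complex.normSq_apply]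
        simp
        nlinarith [hre z hz]
      exact le_of_sq_le_sq e (norm_nonneg _))
  obtain ⟨φ1, hφ1d, hφ1b, hφ1⟩ := schur_step φ hφd hφb
  obtain ⟨φ2, hφ2d, hφ2b, hφ2⟩ := schur_step φ1 hφ1d hφ1b
  have k0 : ContinuousAt φ 0 := (hφd.differentiableAt hnhds).continuousAt
  have k1 : ContinuousAt φ1 0 := (hφ1d.differentiableAt hnhds).continuousAt
  have k2 : ContinuousAt φ2 0 := (hφ2d.differentiableAt hnhds).continuousAt
  simp only [hp0, sub_self, zero_div, map_zero, zero_mul, sub_zero, mul_one] at hφ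
  have E0 : ∀ z ∈ unitDisk, z * (φ z * (2 + z * q1 z)) = z * q1 z := by
    intro z hz
    have := hφ z hz
    rw [div_eq_iff (hne z hz), e1 z hz, hpc0] at this
    linear_combination -this
  have P1 : φ 0 * (2 + 0 * q1 0) = q1 0 :=
    limit_step (fun z => φ z * (2 + z * q1 z)) q1 (by fun_prop) c1 E0
  have E0' : ∀ z ∈ unitDisk, φ z * (2 + z * q1 z) = q1 z := by
    intro z hz
    by_cases h : z = 0
    · subst h; exact P1
    · exact mul_left_cancel₀ h (E0 z hz)
  have hconj : (starRingEnd ℂ) (φ 0) = φ 0 := by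
    have : φ 0 = pc 1 / 2 := by rw [← v1, ← P1]; ring
    rw [this, map_div₀, Complex.conj_eq_iff_im.2 hp1_real, map_ofNat]
  rw [hconj] at hφ1
  set a := φ 0 with ha
  set x := φ1 0 with hx
  have A : pc 1 = 2 * a := by rw [← v1, ← P1]; ring
  have E1 : ∀ z ∈ unitDisk,
      z * (2 * φ1 z * (1 - a * φ z) + q1 z * φ z) = z * q2 z := by
    intro z hz
    linear_combination E0' z hz + e2 z hz - 2 * hφ1 z hz + A
  have P2 := limit_step (fun z => 2 * φ1 z * (1 - a * φ z) + q1 z * φ z) q2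
    (by fun_prop) c2 E1
  have E1' : ∀ z ∈ unitDisk, 2 * φ1 z * (1 - a * φ z) + q1 z * φ z = q2 z := by
    intro z hz
    by_cases h : z = 0
    · subst h; exact P2
    · exact mul_left_cancel₀ h (E1 z hz)
  simp only [v1, v2, ← ha, ← hx, A] at P2
  have E2 : ∀ z ∈ unitDisk,
      z * (2 * (φ2 z * (1 - (starRingEnd ℂ) x * φ1 z)) * (1 - a * φ z)
        - 2 * x * a * φ1 z * (1 - a * φ z) + 2 * a * φ1 z * (1 - a * φ z) + q2 z * φ z)
        = z * q3 z := by
    intro z hz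
    linear_combination E1' z hz + e3 z hz - 2 * (1 - a * φ z) * hφ2 z hz
      + (2 * x * a - 2 * a) * hφ1 z hz - φ z * e2 z hz - φ z * A - P2
  have P3 := limit_step (fun z => 2 * (φ2 z * (1 - (starRingEnd ℂ) x * φ1 z)) * (1 - a * φ z)
        - 2 * x * a * φ1 z * (1 - a * φ z) + 2 * a * φ1 z * (1 - a * φ z) + q2 z * φ z) q3
    (by fun_prop) c3 E2
  simp only [v2, v3, ← ha, ← hx] at P3
  have N : (starRingEnd ℂ) x * x = ((‖x‖ : ℝ) : ℂ) ^ 2 := by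
    rw [mul_comm, Complex.mul_conj, Complex.normSq_eq_norm_sq]; push_cast; rfl
  rw [N] at P3
  refine ⟨x, φ2 0, hφ1b 0 h0, hφ2b 0 h0, ?_, ?_⟩
  · rw [A]; linear_combination -2 * P2
  · rw [A]; linear_combination -4 * P3 - 4 * a * P2
end
end
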